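/- arXiv:1704.07717 — 2 statements merged into one kernel-verified Lean document; each statement's English description precedes it below -/
import Mathlib

section
/- Let (X,d_X,μ_X) and (Y,d_Y,μ_Y) be metric measure spaces with μ_X and μ_Y σ-finite, such that (X,d_X,μ_X) satisfies the general inequality B̄M(1) and (Y,d_Y,μ_Y) satisfies PL. Let μ be the measure on X×Y given by dμ(x,y)=φ(x,y)dμ_{X×Y}(x,y) where φ is log-concave with respect to the product metric ρ. Let λ∈(0,1) and let A,B⊆X×Y be non-empty measurable sets such that (1−λ)A⋆λB is also measurable and sup_{x∈X} ∫_Y χ_A(x,y)φ(x,y)dμ_Y(y) = sup_{x∈X} ∫_Y χ_B(x,y)φ(x,y)dμ_Y(y). Then μ((1−λ)A⋆λB) ≥ (1−λ)μ(A) + λμ(B). -/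
open MeasureTheory Set Metric Filter
open scoped ENNReal NNReal Topology Pointwise

noncomputable section

/-- The `d`-convex combination `(1-λ)A ⋆_d λB` of two sets. -/
def starComb {Z : Type*} (d : Z → Z → ℝ) (lam : ℝ) (A B : Set Z) : Set Z :=
  {z | ∃ a ∈ A, ∃ b ∈ B, d z a = lam * d a b ∧ d z b = (1 - lam) * d a b}

/-- A distance is strictly intrinsic: closed balls of radii summing to the distance
between their centers intersect. -/
def StrictlyIntrinsicDist {Z : Type*} (d : Z → Z → ℝ) : Prop :=
  ∀ x y : Z, ∀ r₁ r₂ : ℝ, 0 ≤ r₁ → 0 ≤ r₂ → r₁ + r₂ = d x y →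
    ∃ z : Z, d z x ≤ r₁ ∧ d z y ≤ r₂

/-- The ℓ² (Euclidean) product metric on `X × Y`. -/
def rho {X Y : Type*} [PseudoMetricSpace X] [PseudoMetricSpace Y] (a b : X × Y) : ℝ :=
  Real.sqrt (dist a.1 b.1 ^ 2 + dist a.2 b.2 ^ 2)

/-- The ℓ² (Euclidean) metric on a finite product of copies of a metric space. -/
def rhoPi {ι : Type*} [Fintype ι] {X : Type*} [PseudoMetricSpace X] (a b : ι → X) : ℝ :=
  Real.sqrt (∑ i, dist (a i) (b i) ^ 2)

open Classical in
/-- The `p`-th mean `M_p(a,b,λ)` of `a, b ∈ [0,∞]`, for `p ∈ ℝ ∪ {±∞}`, with the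
convention that it vanishes whenever `a * b = 0`. -/
def Mp (p : EReal) (lam : ℝ) (a b : ℝ≥0∞) : ℝ≥0∞ :=
  if a = 0 ∨ b = 0 then 0
  else if p = ⊤ then max a b
  else if p = ⊥ then min a b
  else if p = 0 then a ^ (1 - lam) * b ^ lam
  else (ENNReal.ofReal (1 - lam) * a ^ p.toReal + ENNReal.ofReal lam * b ^ p.toReal) ^ (1 / p.toReal)

open Classical in
/-- The `p`-th mean `M_p(a,b,λ)` of nonnegative reals, with the zero convention. -/
def MpR (p : EReal) (lam a b : ℝ) : ℝ :=
  if a = 0 ∨ b = 0 then 0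
  else if p = ⊤ then max a b
  else if p = ⊥ then min a b
  else if p = 0 then a ^ (1 - lam) * b ^ lam
  else ((1 - lam) * a ^ p.toReal + lam * b ^ p.toReal) ^ (1 / p.toReal)

/-- `(X,d,μ)` satisfies `BM(p)`. -/
def SatisfiesBM {X : Type*} [MeasurableSpace X] (d : X → X → ℝ) (μ : Measure X)
    (p : EReal) : Prop :=
  ∀ lam : ℝ, lam ∈ Ioo (0:ℝ) 1 → ∀ A B C : Set X, A.Nonempty → B.Nonempty →
    MeasurableSet A → MeasurableSet B → MeasurableSet C →
    μ A ≠ 0 → μ B ≠ 0 → starComb d lam A B ⊆ C →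
    Mp p lam (μ A) (μ B) ≤ μ C

/-- `(X,d,μ)` satisfies the general (linear) inequality `B̄M(1)`:
`μ(C) ≥ (1-λ)μ(A) + λμ(B)` for all nonempty measurable `A, B, C` with
`C ⊇ (1-λ)A ⋆ λB`. -/
def SatisfiesBMbarLinear {X : Type*} [MeasurableSpace X] (d : X → X → ℝ)
    (μ : Measure X) : Prop :=
  ∀ lam : ℝ, lam ∈ Ioo (0:ℝ) 1 → ∀ A B C : Set X, A.Nonempty → B.Nonempty →
    MeasurableSet A → MeasurableSet B → MeasurableSet C →
    starComb d lam A B ⊆ C →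
    ENNReal.ofReal (1 - lam) * μ A + ENNReal.ofReal lam * μ B ≤ μ C

/-- `(X,d,μ)` satisfies the general inequality `B̄M(p)` for a real `p > 0`:
`μ(C) ≥ ((1-λ)μ(A)^p + λμ(B)^p)^{1/p}` for all nonempty measurable `A, B, C`
with `C ⊇ (1-λ)A ⋆ λB`. -/
def SatisfiesBMbarPos {X : Type*} [MeasurableSpace X] (d : X → X → ℝ) (μ : Measure X)
    (p : ℝ) : Prop :=
  ∀ lam : ℝ, lam ∈ Ioo (0:ℝ) 1 → ∀ A B C : Set X, A.Nonempty → B.Nonempty →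
    MeasurableSet A → MeasurableSet B → MeasurableSet C →
    starComb d lam A B ⊆ C →
    (ENNReal.ofReal (1 - lam) * μ A ^ p + ENNReal.ofReal lam * μ B ^ p) ^ (1/p) ≤ μ C

/-- `(X,d,μ)` satisfies the weighted inequality `BM(p,q)`:
`μ(C)^p ≥ (1-λ)^q μ(A)^p + λ^q μ(B)^p` for all nonempty measurable sets of positive
measure with `C ⊇ (1-λ)A ⋆ λB`. -/
def SatisfiesBMW {X : Type*} [MeasurableSpace X] (d : X → X → ℝ) (μ : Measure X)
    (p q : ℝ) : Prop :=
  ∀ lam : ℝ, lam ∈ Ioo (0:ℝ) 1 → ∀ A B C : Set X, A.Nonempty → B.Nonempty →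
    MeasurableSet A → MeasurableSet B → MeasurableSet C →
    μ A ≠ 0 → μ B ≠ 0 → starComb d lam A B ⊆ C →
    ENNReal.ofReal ((1 - lam) ^ q) * μ A ^ p + ENNReal.ofReal (lam ^ q) * μ B ^ p ≤ μ C ^ p

/-- `(X,d,μ)` satisfies the Prékopa–Leindler inequality `PL`. -/
def SatisfiesPL {X : Type*} [MeasurableSpace X] (d : X → X → ℝ) (μ : Measure X) : Prop :=
  ∀ lam : ℝ, lam ∈ Ioo (0:ℝ) 1 → ∀ f g h : X → ℝ≥0∞,
    Measurable f → Measurable g → Measurable h →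
    (∀ x y z : X, d z x = lam * d x y → d z y = (1 - lam) * d x y →
      f x ^ (1 - lam) * g y ^ lam ≤ h z) →
    (∫⁻ x, f x ∂μ) ^ (1 - lam) * (∫⁻ x, g x ∂μ) ^ lam ≤ ∫⁻ x, h x ∂μ

open Classical in
/-- `(X,d,μ)` satisfies the Borell–Brascamp–Lieb inequality `BBL(p,m)`. -/
def SatisfiesBBL {X : Type*} [MeasurableSpace X] (d : X → X → ℝ) (μ : Measure X)
    (p m : ℝ) : Prop :=
  ∀ lam : ℝ, lam ∈ Ioo (0:ℝ) 1 → ∀ f g h : X → ℝ≥0∞,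
    Measurable f → Measurable g → Measurable h →
    (∀ x y z : X, d z x = lam * d x y → d z y = (1 - lam) * d x y →
      Mp (p : EReal) lam (f x) (g y) ≤ h z) →
    Mp (if m * p + 1 = 0 then (⊥ : EReal) else ((p / (m * p + 1) : ℝ) : EReal)) lam
      (∫⁻ x, f x ∂μ) (∫⁻ x, g x ∂μ) ≤ ∫⁻ x, h x ∂μ

/-- `φ : ℝ → ℝ` is positively decreasing: `t ↦ φ(t)` and `t ↦ φ(-t)` are
non-increasing on `[0,∞)`. -/
def PositivelyDecreasing (φ : ℝ → ℝ) : Prop :=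
  (∀ s t : ℝ, 0 ≤ s → s ≤ t → φ t ≤ φ s) ∧ (∀ s t : ℝ, 0 ≤ s → s ≤ t → φ (-t) ≤ φ (-s))

/-- A set `A ⊆ ℝⁿ` is weakly unconditional. -/
def WeaklyUnconditional {n : ℕ} (A : Set (Fin n → ℝ)) : Prop :=
  ∀ x ∈ A, ∀ ε : Fin n → ℝ, (∀ i, ε i = 0 ∨ ε i = 1) → (fun i => ε i * x i) ∈ A

/-- A nonnegative function on a real vector space is `p`-concave. -/
def PConcaveFn {E : Type*} [AddCommGroup E] [Module ℝ E] (p : EReal) (φ : E → ℝ) : Prop :=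
  ∀ x y : E, ∀ lam : ℝ, lam ∈ Ioo (0:ℝ) 1 →
    MpR p lam (φ x) (φ y) ≤ φ ((1 - lam) • x + lam • y)

/-- A function on a real vector space is radially decreasing. -/
def RadiallyDecreasing {E : Type*} [AddCommGroup E] [Module ℝ E] (φ : E → ℝ) : Prop :=
  ∀ x : E, ∀ t : ℝ, t ∈ Icc (0:ℝ) 1 → φ x ≤ φ (t • x)


theorem vol_layer (a : ℝ≥0∞) :
    ∫⁻ t in Ioi (0:ℝ), (if ENNReal.ofReal t < a then (1:ℝ≥0∞) else 0) = a := by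
  have h1 : ∀ t : ℝ, (if ENNReal.ofReal t < a then (1:ℝ≥0∞) else 0)
      = {t : ℝ | ENNReal.ofReal t < a}.indicator 1 t := by
    intro t; simp [indicator]
  have hm : MeasurableSet {t : ℝ | ENNReal.ofReal t < a} :=
    measurableSet_lt ENNReal.measurable_ofReal measurable_const
  simp_rw [h1]
  rw [lintegral_indicator_one hm, Measure.restrict_apply hm]
  by_cases ha : a = ⊤
  · subst ha
    simp
  · have : {t : ℝ | ENNReal.ofReal t < a} ∩ Ioi 0 = Ioo 0 a.toReal := by
      ext t
      simp only [mem_inter_iff, mem_ofPred_eq, mem_Ioi, mem_Ioo]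
      constructor
      · rintro ⟨h, h0⟩
        exact ⟨h0, (ENNReal.ofReal_lt_iff_lt_toReal h0.le ha).1 h⟩
      · rintro ⟨h0, h⟩
        exact ⟨(ENNReal.ofReal_lt_iff_lt_toReal h0.le ha).2 h, h0⟩
    rw [this, Real.volume_Ioo, sub_zero, ENNReal.ofReal_toReal ha]

theorem layer_cake {X : Type*} [MeasurableSpace X] (μ : Measure X) [SigmaFinite μ]
    (F : X → ℝ≥0∞) (hF : Measurable F) :
    ∫⁻ x, F x ∂μ = ∫⁻ t in Ioi (0:ℝ), μ {x | ENNReal.ofReal t < F x} := by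
  have hmeas : Measurable (fun p : X × ℝ =>
      if ENNReal.ofReal p.2 < F p.1 then (1:ℝ≥0∞) else 0) := by
    refine Measurable.ite ?_ measurable_const measurable_const
    exact measurableSet_lt (ENNReal.measurable_ofReal.comp measurable_snd) (hF.comp measurable_fst)
  calc ∫⁻ x, F x ∂μ
      = ∫⁻ x, (∫⁻ t in Ioi (0:ℝ), (if ENNReal.ofReal t < F x then (1:ℝ≥0∞) else 0)) ∂μ := by
        simp_rw [vol_layer]
    _ = ∫⁻ t in Ioi (0:ℝ), (∫⁻ x, (if ENNReal.ofReal t < F x then (1:ℝ≥0∞) else 0) ∂μ) :=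
        lintegral_lintegral_swap hmeas.aemeasurable
    _ = _ := by
        refine lintegral_congr fun t => ?_
        have hm : MeasurableSet {x | ENNReal.ofReal t < F x} :=
          measurableSet_lt measurable_const hF
        rw [← lintegral_indicator_one hm]
        refine lintegral_congr fun x => ?_
        simp [indicator]

theorem rho_scale {X Y : Type*} [MetricSpace X] [MetricSpace Y] (z w a b : X × Y) (c : ℝ)
    (hc : 0 ≤ c) (h1 : dist z.1 w.1 = c * dist a.1 b.1) (h2 : dist z.2 w.2 = c * dist a.2 b.2) :
    rho z w = c * rho a b := by
  unfold rho
  rw [h1, h2, show (c * dist a.1 b.1) ^ 2 + (c * dist a.2 b.2) ^ 2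
    = c ^ 2 * (dist a.1 b.1 ^ 2 + dist a.2 b.2 ^ 2) by ring,
    Real.sqrt_mul (sq_nonneg c), Real.sqrt_sq hc]

theorem lt_geomMean {t a b : ℝ≥0∞} {lam : ℝ} (hl : lam ∈ Ioo (0:ℝ) 1) (ha : t < a) (hb : t < b) :
    t < a ^ (1 - lam) * b ^ lam := by
  have h0 : 0 ≤ 1 - lam := by linarith [hl.2]
  have h1 : 0 ≤ lam := hl.1.le
  calc t < min a b := lt_min ha hb
    _ = min a b ^ (1 - lam) * min a b ^ lam := by
        rw [← ENNReal.rpow_add_of_nonneg _ _ h0 h1]; simp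
    _ ≤ _ := mul_le_mul' (ENNReal.rpow_le_rpow (min_le_left _ _) h0)
        (ENNReal.rpow_le_rpow (min_le_right _ _) h1)

theorem meas_section {X Y : Type*} [MeasurableSpace X] [MeasurableSpace Y]
    (μX : Measure X) (μY : Measure Y) [SigmaFinite μX] [SigmaFinite μY]
    (φ : X × Y → ℝ≥0∞) (hφ : Measurable φ) (S : Set (X × Y)) (hS : MeasurableSet S) :
    (μX.prod μY).withDensity φ S = ∫⁻ x, ∫⁻ y, S.indicator φ (x, y) ∂μY ∂μX := by
  rw [withDensity_apply _ hS, ← lintegral_indicator hS,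
    lintegral_prod _ (hφ.indicator hS).aemeasurable]

theorem sec_eq {X Y : Type*} [MeasurableSpace X] [MeasurableSpace Y] (μY : Measure Y)
    (φ : X × Y → ℝ≥0∞) (S : Set (X × Y)) (hS : MeasurableSet S) (x : X) :
    ∫⁻ y in {y : Y | (x, y) ∈ S}, φ (x, y) ∂μY = ∫⁻ y, S.indicator φ (x, y) ∂μY := by
  have hm : MeasurableSet {y : Y | (x, y) ∈ S} := measurable_prodMk_left hS
  rw [← lintegral_indicator hm]
  rfl

theorem final_step {X : Type*} [MetricSpace X] [MeasurableSpace X]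
    (μX : Measure X) [SigmaFinite μX] (hX : SatisfiesBMbarLinear (dist : X → X → ℝ) μX)
    {lam : ℝ} (hlam : lam ∈ Ioo (0:ℝ) 1) (F G H : X → ℝ≥0∞)
    (hF : Measurable F) (hG : Measurable G) (hH : Measurable H)
    (key : ∀ x₁ x₂ z : X, dist z x₁ = lam * dist x₁ x₂ → dist z x₂ = (1 - lam) * dist x₁ x₂ →
      F x₁ ^ (1 - lam) * G x₂ ^ lam ≤ H z)
    (hsup : ⨆ x, F x = ⨆ x, G x) :
    ENNReal.ofReal (1 - lam) * ∫⁻ x, F x ∂μX + ENNReal.ofReal lam * ∫⁻ x, G x ∂μX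
      ≤ ∫⁻ x, H x ∂μX := by
  have anti : ∀ F : X → ℝ≥0∞, Measurable (fun t : ℝ => μX {x | ENNReal.ofReal t < F x}) := by
    intro F
    refine Antitone.measurable fun s t hst => measure_mono fun x hx => ?_
    exact lt_of_le_of_lt (ENNReal.ofReal_le_ofReal hst) hx
  rw [layer_cake μX F hF, layer_cake μX G hG, layer_cake μX H hH,
    ← lintegral_const_mul _ (anti F), ← lintegral_const_mul _ (anti G),
    ← lintegral_add_left ((anti F).const_mul _)]
  refine lintegral_mono fun t => ?_
  by_cases ht : ENNReal.ofReal t < ⨆ x, F x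
  · have hFn : {x | ENNReal.ofReal t < F x}.Nonempty := lt_iSup_iff.1 ht
    have hGn : {x | ENNReal.ofReal t < G x}.Nonempty := by
      rw [hsup] at ht
      exact lt_iSup_iff.1 ht
    refine hX lam hlam _ _ _ hFn hGn (measurableSet_lt measurable_const hF)
      (measurableSet_lt measurable_const hG) (measurableSet_lt measurable_const hH) ?_
    rintro z ⟨a, ha, b, hb, h1, h2⟩
    exact (lt_geomMean hlam ha hb).trans_le (key a b z h1 h2)
  · have e1 : {x | ENNReal.ofReal t < F x} = ∅ := by
      ext x
      simpa using (le_iSup F x).trans (not_lt.1 ht)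
    have e2 : {x | ENNReal.ofReal t < G x} = ∅ := by
      ext x
      simpa using (le_iSup G x).trans (hsup ▸ not_lt.1 ht)
    simp [e1, e2]

/-- Theorem C / `t:BM_lin1_MetSpa`: linear Brunn–Minkowski inequality on
`X × Y` for a log-concave density, when `X` satisfies `B̄M(1)`, `Y` satisfies `PL`, and the
two sets have equal maximal "marginal" sections. -/
theorem statement2 {X Y : Type*} [MetricSpace X] [MetricSpace Y]
    [MeasurableSpace X] [OpensMeasurableSpace X] [MeasurableSpace Y] [OpensMeasurableSpace Y]
    (μX : Measure X) (μY : Measure Y) [SigmaFinite μX] [SigmaFinite μY]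
    (hdX : StrictlyIntrinsicDist (dist : X → X → ℝ))
    (hdY : StrictlyIntrinsicDist (dist : Y → Y → ℝ))
    (hX : SatisfiesBMbarLinear (dist : X → X → ℝ) μX)
    (hYPL : SatisfiesPL (dist : Y → Y → ℝ) μY)
    (φ : X × Y → ℝ≥0∞) (hφmeas : Measurable φ)
    (hφlc : ∀ lam : ℝ, lam ∈ Ioo (0:ℝ) 1 → ∀ x y z : X × Y,
      rho z x = lam * rho x y → rho z y = (1 - lam) * rho x y →
      φ x ^ (1 - lam) * φ y ^ lam ≤ φ z)
    (μ : Measure (X × Y)) (hμ : μ = (μX.prod μY).withDensity φ)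
    (lam : ℝ) (hlam : lam ∈ Ioo (0:ℝ) 1)
    (A B : Set (X × Y)) (hA : A.Nonempty) (hB : B.Nonempty)
    (hAm : MeasurableSet A) (hBm : MeasurableSet B)
    (hCm : MeasurableSet (starComb (rho : X × Y → X × Y → ℝ) lam A B))
    (hsup : (⨆ x : X, ∫⁻ y in {y : Y | (x, y) ∈ A}, φ (x, y) ∂μY)
          = ⨆ x : X, ∫⁻ y in {y : Y | (x, y) ∈ B}, φ (x, y) ∂μY) :
    ENNReal.ofReal (1 - lam) * μ A + ENNReal.ofReal lam * μ B
      ≤ μ (starComb (rho : X × Y → X × Y → ℝ) lam A B) := by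
  have h0 : 0 ≤ 1 - lam := by linarith [hlam.2]
  have h0' : 0 < 1 - lam := by linarith [hlam.2]
  have h1 : 0 ≤ lam := hlam.1.le
  simp_rw [sec_eq μY φ A hAm, sec_eq μY φ B hBm] at hsup
  set C := starComb (rho : X × Y → X × Y → ℝ) lam A B with hC
  subst hμ
  rw [meas_section μX μY φ hφmeas A hAm, meas_section μX μY φ hφmeas B hBm,
    meas_section μX μY φ hφmeas C hCm]
  have hmeas : ∀ S : Set (X × Y), MeasurableSet S →
      Measurable (fun x => ∫⁻ y, S.indicator φ (x, y) ∂μY) := fun S hS =>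
    (hφmeas.indicator hS).lintegral_prod_right'
  have hFm := hmeas A hAm
  have hGm := hmeas B hBm
  have hHm := hmeas C hCm
  have key : ∀ x₁ x₂ z : X, dist z x₁ = lam * dist x₁ x₂ → dist z x₂ = (1 - lam) * dist x₁ x₂ →
      (∫⁻ y, A.indicator φ (x₁, y) ∂μY) ^ (1 - lam) * (∫⁻ y, B.indicator φ (x₂, y) ∂μY) ^ lam
        ≤ ∫⁻ y, C.indicator φ (z, y) ∂μY := by
    intro x₁ x₂ z hz1 hz2
    refine hYPL lam hlam _ _ _ ((hφmeas.indicator hAm).comp measurable_prodMk_left)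
      ((hφmeas.indicator hBm).comp measurable_prodMk_left)
      ((hφmeas.indicator hCm).comp measurable_prodMk_left) ?_
    intro y₁ y₂ w hw1 hw2
    by_cases ha : (x₁, y₁) ∈ A
    · by_cases hb : (x₂, y₂) ∈ B
      · have r1 : rho (z, w) (x₁, y₁) = lam * rho (x₁, y₁) (x₂, y₂) :=
          rho_scale _ _ _ _ _ h1 hz1 hw1
        have r2 : rho (z, w) (x₂, y₂) = (1 - lam) * rho (x₁, y₁) (x₂, y₂) :=
          rho_scale _ _ _ _ _ h0 hz2 hw2
        have hc : (z, w) ∈ C := ⟨_, ha, _, hb, r1, r2⟩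
        rw [indicator_of_mem ha, indicator_of_mem hb, indicator_of_mem hc]
        exact hφlc lam hlam _ _ _ r1 r2
      · rw [indicator_of_notMem hb, ENNReal.zero_rpow_of_pos hlam.1, mul_zero]
        exact zero_le
    · rw [indicator_of_notMem ha, ENNReal.zero_rpow_of_pos h0', zero_mul]
      exact zero_le
  exact final_step μX hX hlam _ _ _ hFm hGm hHm key hsup

end
end

section
/- Let (X,d_X,μ_X) and (Y,d_Y,μ_Y) be metric measure spaces with μ_X σ-finite, μ_Y locally finite and μ_{X×Y} a Radon measure, and let n,N>0. If (X,d_X,μ_X) satisfies the general inequality B̄M(1) and (Y,d_Y,μ_Y) satisfies the weighted inequality BM(1/n,N/n), then (X×Y,ρ,μ_{X×Y}) satisfies BM(1/(n+1),(N+1)/(n+1)). -/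
open MeasureTheory Set Metric Filter
open scoped ENNReal NNReal Topology Pointwise

noncomputable section

/-- Compact subsets of a product of metric spaces are measurable for the product σ-algebra. -/
theorem measurableSet_of_isCompact_prod {X Y : Type*} [MetricSpace X] [MetricSpace Y]
    [MeasurableSpace X] [OpensMeasurableSpace X] [MeasurableSpace Y] [OpensMeasurableSpace Y]
    {K : Set (X × Y)} (hK : IsCompact K) : MeasurableSet K := by
  have hpos : ∀ m : ℕ, (0:ℝ) < 1 / ((m:ℝ) + 1) := fun m => by positivity
  choose t htK htf htc using fun m : ℕ => finite_cover_balls_of_compact hK (hpos m)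
  have hEq : K = ⋂ m : ℕ, ⋃ x ∈ t m, ball x (1 / ((m:ℝ) + 1)) := by
    apply Subset.antisymm
    · exact subset_iInter htc
    · intro p hp
      rw [← hK.isClosed.closure_eq, Metric.mem_closure_iff]
      intro ε hε
      obtain ⟨m, hm⟩ := exists_nat_one_div_lt hε
      have h1 := mem_iInter.1 hp m
      simp only [mem_iUnion] at h1
      obtain ⟨x, hx, hpx⟩ := h1
      exact ⟨x, htK m hx, lt_trans hpx hm⟩
  rw [hEq]
  refine MeasurableSet.iInter fun m => (htf m).measurableSet_biUnion fun x _ => ?_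
  rw [← Prod.mk.eta (p := x), ← ball_prod_same]
  exact measurableSet_ball.prod measurableSet_ball

/-- Functional form of the linear inequality, for functions with supremum one. -/
theorem functional_linear {X : Type*} [MeasurableSpace X] {d : X → X → ℝ} {μ : Measure X}
    (hX : SatisfiesBMbarLinear d μ) {lam : ℝ} (hlam : lam ∈ Ioo (0:ℝ) 1)
    {f g h : X → ℝ≥0∞} (hf : Measurable f) (hg : Measurable g) (hh : Measurable h)
    (hf1 : ∀ x, f x ≤ 1) (hg1 : ∀ x, g x ≤ 1)
    (hfs : ∀ t : ℝ≥0∞, t < 1 → ∃ x, t < f x) (hgs : ∀ t : ℝ≥0∞, t < 1 → ∃ x, t < g x)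
    (H : ∀ t : ℝ≥0∞, t < 1 → ∀ x y z, t < f x → t < g y → d z x = lam * d x y →
      d z y = (1 - lam) * d x y → t ≤ h z) :
    ENNReal.ofReal (1 - lam) * ∫⁻ x, f x ∂μ + ENNReal.ofReal lam * ∫⁻ x, g x ∂μ
      ≤ ∫⁻ x, h x ∂μ := by
  have hft : ∀ x, f x ≠ ⊤ := fun x => ne_top_of_le_ne_top ENNReal.one_ne_top (hf1 x)
  have hgt : ∀ x, g x ≠ ⊤ := fun x => ne_top_of_le_ne_top ENNReal.one_ne_top (hg1 x)
  have hht : ∀ x, min (h x) 1 ≠ ⊤ := fun x =>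
    ne_top_of_le_ne_top ENNReal.one_ne_top (min_le_right _ _)
  have ef : ∫⁻ x, f x ∂μ = ∫⁻ t in Ioi (0:ℝ), μ {x | t < (f x).toReal} := by
    rw [← lintegral_eq_lintegral_meas_lt μ (ae_of_all _ fun x => ENNReal.toReal_nonneg)
      hf.ennreal_toReal.aemeasurable]
    exact lintegral_congr fun x => (ENNReal.ofReal_toReal (hft x)).symm
  have eg : ∫⁻ x, g x ∂μ = ∫⁻ t in Ioi (0:ℝ), μ {x | t < (g x).toReal} := by
    rw [← lintegral_eq_lintegral_meas_lt μ (ae_of_all _ fun x => ENNReal.toReal_nonneg)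
      hg.ennreal_toReal.aemeasurable]
    exact lintegral_congr fun x => (ENNReal.ofReal_toReal (hgt x)).symm
  have hm : Measurable fun x => min (h x) 1 := hh.min measurable_const
  have eh : ∫⁻ x, min (h x) 1 ∂μ = ∫⁻ t in Ioi (0:ℝ), μ {x | t ≤ (min (h x) 1).toReal} := by
    rw [← lintegral_eq_lintegral_meas_le μ (ae_of_all _ fun x => ENNReal.toReal_nonneg)
      hm.ennreal_toReal.aemeasurable]
    exact lintegral_congr fun x => (ENNReal.ofReal_toReal (hht x)).symm
  have hle : ∫⁻ x, min (h x) 1 ∂μ ≤ ∫⁻ x, h x ∂μ := lintegral_mono fun x => min_le_left _ _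
  refine le_trans ?_ hle
  rw [ef, eg, eh, ← lintegral_const_mul' _ _ ENNReal.ofReal_ne_top,
    ← lintegral_const_mul' _ _ ENNReal.ofReal_ne_top]
  refine le_trans (le_lintegral_add _ _) ?_
  refine setLIntegral_mono' measurableSet_Ioi fun t ht => ?_
  have ht0 : (0:ℝ) < t := ht
  have key : ∀ a : ℝ≥0∞, a ≠ ⊤ → (t < a.toReal ↔ ENNReal.ofReal t < a) := fun a ha =>
    (ENNReal.ofReal_lt_iff_lt_toReal ht0.le ha).symm
  rcases lt_or_ge t 1 with h1 | h1
  · have h1' : ENNReal.ofReal t < 1 := by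
      rwa [ENNReal.ofReal_lt_one]
    refine hX lam hlam _ _ _ ?_ ?_ ?_ ?_ ?_ ?_
    · obtain ⟨x, hx⟩ := hfs _ h1'
      exact ⟨x, (key _ (hft x)).2 hx⟩
    · obtain ⟨x, hx⟩ := hgs _ h1'
      exact ⟨x, (key _ (hgt x)).2 hx⟩
    · exact measurableSet_lt measurable_const hf.ennreal_toReal
    · exact measurableSet_lt measurable_const hg.ennreal_toReal
    · exact measurableSet_le measurable_const hm.ennreal_toReal
    · rintro z ⟨x, hx, y, hy, e1, e2⟩
      have := H _ h1' x y z ((key _ (hft x)).1 hx) ((key _ (hgt y)).1 hy) e1 e2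
      exact (ENNReal.ofReal_le_iff_le_toReal (hht z)).1 (le_min this h1'.le)
  · have e1 : {x | t < (f x).toReal} = ∅ := by
      ext x
      simp only [mem_setOf_eq, mem_empty_iff_false, iff_false, not_lt]
      exact le_trans (ENNReal.toReal_mono ENNReal.one_ne_top (hf1 x)) (by simpa using h1)
    have e2 : {x | t < (g x).toReal} = ∅ := by
      ext x
      simp only [mem_setOf_eq, mem_empty_iff_false, iff_false, not_lt]
      exact le_trans (ENNReal.toReal_mono ENNReal.one_ne_top (hg1 x)) (by simpa using h1)
    simp [e1, e2]

/-- An a.e.-measurable function has a measurable majorant which agrees with it a.e. -/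
theorem exists_measurable_ge_ae {X : Type*} [MeasurableSpace X] {μ : Measure X}
    {h : X → ℝ≥0∞} (hh : AEMeasurable h μ) :
    ∃ k : X → ℝ≥0∞, Measurable k ∧ (∀ x, h x ≤ k x) ∧ ∫⁻ x, k x ∂μ = ∫⁻ x, h x ∂μ := by
  classical
  set S : Set X := toMeasurable μ {x | ¬ h x = hh.mk h x} with hS
  have hS0 : μ S = 0 := by
    rw [hS, measure_toMeasurable]; exact hh.ae_eq_mk
  refine ⟨S.piecewise (fun _ => ⊤) (hh.mk h), ?_, ?_, ?_⟩
  · exact Measurable.piecewise (measurableSet_toMeasurable _ _) measurable_const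
      hh.measurable_mk
  · intro x
    by_cases hx : x ∈ S
    · simp [hx]
    · have : h x = hh.mk h x := by
        by_contra hc
        exact hx (subset_toMeasurable _ _ hc)
      simp [hx, this]
  · apply lintegral_congr_ae
    have : ∀ᵐ x ∂μ, x ∉ S := measure_eq_zero_iff_ae_notMem.1 hS0
    filter_upwards [this, hh.ae_eq_mk] with x hx h2
    simp [hx, h2]

/-- The Hölder step. -/
theorem holder_step {n N lam : ℝ} (hn : 0 < n) (hlam : lam ∈ Ioo (0:ℝ) 1)
    {F G a b : ℝ≥0∞} (hF : F ≠ 0) (hF' : F ≠ ⊤) (hG : G ≠ 0) (hG' : G ≠ ⊤) :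
    ENNReal.ofReal ((1 - lam) ^ ((N+1)/(n+1))) * a ^ (1/(n+1)) +
      ENNReal.ofReal (lam ^ ((N+1)/(n+1))) * b ^ (1/(n+1)) ≤
    ((ENNReal.ofReal ((1 - lam) ^ (N/n)) * F ^ (1/n) +
      ENNReal.ofReal (lam ^ (N/n)) * G ^ (1/n)) ^ n *
      (ENNReal.ofReal (1 - lam) * (a / F) + ENNReal.ofReal lam * (b / G))) ^ (1/(n+1)) := by
  have h1 : 0 < 1 - lam := by linarith [hlam.2]
  have h0 : 0 < lam := hlam.1
  have hn1 : 0 < n + 1 := by linarith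
  have hpq : ((n+1)/n).HolderConjugate (n+1) := by
    rw [Real.holderConjugate_iff]
    constructor
    · rw [lt_div_iff₀ hn]; linarith
    · field_simp
  have term : ∀ (c : ℝ) (W u : ℝ≥0∞), 0 < c → W ≠ 0 → W ≠ ⊤ →
      ENNReal.ofReal (c ^ ((N+1)/(n+1))) * u ^ (1/(n+1)) =
      (ENNReal.ofReal (c ^ (N/n)) * W ^ (1/n)) ^ (n/(n+1)) *
        (ENNReal.ofReal c * (u / W)) ^ (1/(n+1)) := by
    intro c W u hc hW hW'
    have hq : 0 ≤ 1/(n+1) := by positivity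
    have hr : 0 ≤ n/(n+1) := by positivity
    rw [ENNReal.mul_rpow_of_nonneg _ _ hr, ENNReal.mul_rpow_of_nonneg _ _ hq,
      ENNReal.ofReal_rpow_of_pos (by positivity), ENNReal.ofReal_rpow_of_pos hc,
      ← ENNReal.rpow_mul, ← Real.rpow_mul hc.le, ENNReal.div_rpow_of_nonneg _ _ hq]
    have e1 : 1 / n * (n / (n+1)) = 1/(n+1) := by field_simp
    have e2 : N / n * (n / (n+1)) = N/(n+1) := by field_simp
    rw [e1, e2, add_div, Real.rpow_add hc, ENNReal.ofReal_mul (by positivity)]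
    have hV0 : W ^ (1/(n+1)) ≠ 0 := by
      simp [ENNReal.rpow_eq_zero_iff, hW, hW']
    have hV1 : W ^ (1/(n+1)) ≠ ⊤ := ENNReal.rpow_ne_top_of_nonneg hq hW'
    have e3 : W ^ (1/(n+1)) * (u ^ (1/(n+1)) / W ^ (1/(n+1))) = u ^ (1/(n+1)) :=
      ENNReal.mul_div_cancel hV0 hV1
    calc _ = ENNReal.ofReal (c ^ (N/(n+1))) * ENNReal.ofReal (c ^ (1/(n+1))) *
          (W ^ (1/(n+1)) * (u ^ (1/(n+1)) / W ^ (1/(n+1)))) := by rw [e3]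
      _ = _ := by ring
  rw [term _ F a h1 hF hF', term _ G b h0 hG hG']
  have hol := ENNReal.inner_le_Lp_mul_Lq (Finset.univ : Finset (Fin 2))
    ![(ENNReal.ofReal ((1-lam) ^ (N/n)) * F ^ (1/n)) ^ (n/(n+1)),
      (ENNReal.ofReal (lam ^ (N/n)) * G ^ (1/n)) ^ (n/(n+1))]
    ![(ENNReal.ofReal (1-lam) * (a / F)) ^ (1/(n+1)),
      (ENNReal.ofReal lam * (b / G)) ^ (1/(n+1))] hpq
  simp only [Fin.sum_univ_two, Matrix.cons_val_zero, Matrix.cons_val_one,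
    ← ENNReal.rpow_mul] at hol
  have e4 : n / (n+1) * ((n+1)/n) = 1 := by field_simp
  have e5 : 1 / (n+1) * (n+1) = 1 := by field_simp
  have e6 : 1 / ((n+1)/n) = n * (1/(n+1)) := by field_simp
  rw [e4, e5, e6] at hol
  simp only [ENNReal.rpow_one] at hol
  refine le_trans hol (le_of_eq ?_)
  rw [ENNReal.mul_rpow_of_nonneg _ _ (by positivity : (0:ℝ) ≤ 1/(n+1)), ← ENNReal.rpow_mul]

theorem rho_eq_mul {X Y : Type*} [MetricSpace X] [MetricSpace Y] {c : ℝ} (hc : 0 ≤ c)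
    {p q r s : X × Y} (h1 : dist p.1 q.1 = c * dist r.1 s.1)
    (h2 : dist p.2 q.2 = c * dist r.2 s.2) : rho p q = c * rho r s := by
  unfold rho
  rw [h1, h2, mul_pow, mul_pow, ← mul_add, Real.sqrt_mul (sq_nonneg c), Real.sqrt_sq hc]

/-- The section-measure function of a compact set. -/
theorem section_facts {X Y : Type*} [MetricSpace X] [MetricSpace Y]
    [MeasurableSpace X] [OpensMeasurableSpace X] [MeasurableSpace Y] [OpensMeasurableSpace Y]
    (μX : Measure X) (μY : Measure Y) [IsLocallyFiniteMeasure μY] {K : Set (X × Y)}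
    (hK : IsCompact K) (hI : ∫⁻ x, μY (Prod.mk x ⁻¹' K) ∂μX ≠ 0) :
    Measurable (fun x => μY (Prod.mk x ⁻¹' K)) ∧
      (⨆ x, μY (Prod.mk x ⁻¹' K)) ≠ 0 ∧ (⨆ x, μY (Prod.mk x ⁻¹' K)) ≠ ⊤ := by
  have hKm := measurableSet_of_isCompact_prod hK
  have hK2 : IsCompact (Prod.snd '' K) := hK.image continuous_snd
  have hsub : ∀ x, Prod.mk x ⁻¹' K ⊆ Prod.snd '' K := fun x y hy => ⟨(x, y), hy, rfl⟩
  have hfin : μY (Prod.snd '' K) < ⊤ := hK2.measure_lt_top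
  refine ⟨?_, ?_, ?_⟩
  · haveI : IsFiniteMeasure (μY.restrict (Prod.snd '' K)) :=
      ⟨by rw [Measure.restrict_apply_univ]; exact hfin⟩
    have := measurable_measure_prodMk_left_finite (ν := μY.restrict (Prod.snd '' K)) hKm
    convert this using 2 with x
    rw [Measure.restrict_apply (measurable_prodMk_left hKm), inter_eq_left.2 (hsub x)]
  · intro h0
    apply hI
    have : ∀ x, μY (Prod.mk x ⁻¹' K) = 0 := fun x => by
      have := le_iSup (fun x => μY (Prod.mk x ⁻¹' K)) x
      rw [h0] at this
      exact le_antisymm this bot_le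
    simp [this]
  · exact ne_top_of_le_ne_top hfin.ne (iSup_le fun x => measure_mono (hsub x))

/-- The statement for compact sets. -/
theorem compact_case {X Y : Type*} [MetricSpace X] [MetricSpace Y]
    [MeasurableSpace X] [OpensMeasurableSpace X] [MeasurableSpace Y] [OpensMeasurableSpace Y]
    (μX : Measure X) (μY : Measure Y) [IsLocallyFiniteMeasure μY]
    (n N : ℝ) (hn : 0 < n)
    (hX : SatisfiesBMbarLinear (dist : X → X → ℝ) μX)
    (hY : SatisfiesBMW (dist : Y → Y → ℝ) μY (1/n) (N/n))
    {lam : ℝ} (hlam : lam ∈ Ioo (0:ℝ) 1) {A B C : Set (X × Y)}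
    (hA : IsCompact A) (hB : IsCompact B) (hC : MeasurableSet C)
    (hA0 : μX.prod μY A ≠ 0) (hB0 : μX.prod μY B ≠ 0)
    (hsub : starComb (rho : X × Y → X × Y → ℝ) lam A B ⊆ C) :
    ENNReal.ofReal ((1 - lam) ^ ((N+1)/(n+1))) * (μX.prod μY A) ^ (1/(n+1)) +
      ENNReal.ofReal (lam ^ ((N+1)/(n+1))) * (μX.prod μY B) ^ (1/(n+1)) ≤
      (μX.prod μY C) ^ (1/(n+1)) := by
  have h1 : 0 < 1 - lam := by linarith [hlam.2]
  have h0 : 0 < lam := hlam.1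
  have hae : AEMeasurable (fun x : X => Measure.map (Prod.mk x) μY) μX := by
    by_contra hc
    apply hA0
    rw [Measure.prod_def, Measure.bind, Measure.map_of_not_aemeasurable hc]
    simp
  have happ : ∀ s : Set (X × Y), MeasurableSet s →
      μX.prod μY s = ∫⁻ x, μY (Prod.mk x ⁻¹' s) ∂μX := fun s hs => by
    rw [Measure.prod_def, Measure.bind_apply hs hae]
    exact lintegral_congr fun x => Measure.map_apply measurable_prodMk_left hs
  have hAm := measurableSet_of_isCompact_prod hA
  have hBm := measurableSet_of_isCompact_prod hB
  rw [happ A hAm] at hA0 ⊢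
  rw [happ B hBm] at hB0 ⊢
  rw [happ C hC]
  have hhae : AEMeasurable (fun x => μY (Prod.mk x ⁻¹' C)) μX := by
    have := (Measure.measurable_coe hC).comp_aemeasurable hae
    refine this.congr (ae_of_all _ fun x => ?_)
    exact Measure.map_apply measurable_prodMk_left hC
  obtain ⟨k, hkm, hkle, hkint⟩ := exists_measurable_ge_ae hhae
  obtain ⟨hfm, hF0, hFt⟩ := section_facts μX μY hA hA0
  obtain ⟨hgm, hG0, hGt⟩ := section_facts μX μY hB hB0
  rw [← hkint]
  set f : X → ℝ≥0∞ := fun x => μY (Prod.mk x ⁻¹' A) with hf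
  set g : X → ℝ≥0∞ := fun x => μY (Prod.mk x ⁻¹' B) with hg
  set F : ℝ≥0∞ := ⨆ x, f x with hFdef
  set G : ℝ≥0∞ := ⨆ x, g x with hGdef
  refine le_trans (holder_step (N := N) hn hlam hF0 hFt hG0 hGt) ?_
  refine ENNReal.rpow_le_rpow ?_ (by positivity)
  set S : ℝ≥0∞ := ENNReal.ofReal ((1 - lam) ^ (N/n)) * F ^ (1/n) +
      ENNReal.ofReal (lam ^ (N/n)) * G ^ (1/n) with hS
  have hinv : 0 < 1 / n := by positivity
  have hSt : S ≠ ⊤ := by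
    rw [hS]
    exact ENNReal.add_ne_top.2
      ⟨ENNReal.mul_ne_top ENNReal.ofReal_ne_top (ENNReal.rpow_ne_top_of_nonneg hinv.le hFt),
       ENNReal.mul_ne_top ENNReal.ofReal_ne_top (ENNReal.rpow_ne_top_of_nonneg hinv.le hGt)⟩
  have hS0 : S ≠ 0 := by
    have hp : 0 < ENNReal.ofReal ((1 - lam) ^ (N/n)) := ENNReal.ofReal_pos.2 (by positivity)
    have hq : 0 < F ^ (1/n) := ENNReal.rpow_pos (pos_iff_ne_zero.2 hF0) hFt
    have : 0 < S := lt_of_lt_of_le (ENNReal.mul_pos hp.ne' hq.ne') le_self_add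
    exact this.ne'
  have hSn0 : S ^ n ≠ 0 := (ENNReal.rpow_pos (pos_iff_ne_zero.2 hS0) hSt).ne'
  have hSnt : S ^ n ≠ ⊤ := ENNReal.rpow_ne_top_of_nonneg hn.le hSt
  have fle : ∀ x, f x ≤ F := fun x => le_iSup f x
  have gle : ∀ x, g x ≤ G := fun x => le_iSup g x
  have lin := functional_linear (f := fun x => f x / F) (g := fun x => g x / G)
    (h := fun x => k x / S ^ n) hX hlam (hfm.div_const F) (hgm.div_const G)
    (hkm.div_const _)
    (fun x => ENNReal.div_le_of_le_mul (by simpa using fle x))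
    (fun x => ENNReal.div_le_of_le_mul (by simpa using gle x)) ?_ ?_ ?_
  · simp only [div_eq_mul_inv] at lin ⊢
    rw [lintegral_mul_const' _ _ (ENNReal.inv_ne_top.2 hF0),
      lintegral_mul_const' _ _ (ENNReal.inv_ne_top.2 hG0),
      lintegral_mul_const' _ _ (ENNReal.inv_ne_top.2 hSn0)] at lin
    refine le_trans (mul_le_mul_right lin (S ^ n)) ?_
    rw [mul_comm (∫⁻ x, k x ∂μX), ← mul_assoc, ENNReal.mul_inv_cancel hSn0 hSnt, one_mul]
  · intro t ht
    have : t * F < F := by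
      simpa using ENNReal.mul_lt_mul_left hF0 hFt ht
    obtain ⟨x, hx⟩ := lt_iSup_iff.1 this
    exact ⟨x, (ENNReal.lt_div_iff_mul_lt (Or.inl hF0) (Or.inl hFt)).2 hx⟩
  · intro t ht
    have : t * G < G := by
      simpa using ENNReal.mul_lt_mul_left hG0 hGt ht
    obtain ⟨x, hx⟩ := lt_iSup_iff.1 this
    exact ⟨x, (ENNReal.lt_div_iff_mul_lt (Or.inl hG0) (Or.inl hGt)).2 hx⟩
  · intro t ht x y z hx hy ezx ezy
    have hx' : t * F < f x := (ENNReal.lt_div_iff_mul_lt (Or.inl hF0) (Or.inl hFt)).1 hx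
    have hy' : t * G < g y := (ENNReal.lt_div_iff_mul_lt (Or.inl hG0) (Or.inl hGt)).1 hy
    have hfx : μY (Prod.mk x ⁻¹' A) ≠ 0 := (lt_of_le_of_lt bot_le hx').ne'
    have hgy : μY (Prod.mk y ⁻¹' B) ≠ 0 := (lt_of_le_of_lt bot_le hy').ne'
    have hBM := hY lam hlam (Prod.mk x ⁻¹' A) (Prod.mk y ⁻¹' B) (Prod.mk z ⁻¹' C)
      (nonempty_of_measure_ne_zero hfx) (nonempty_of_measure_ne_zero hgy)
      (measurable_prodMk_left hAm) (measurable_prodMk_left hBm) (measurable_prodMk_left hC)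
      hfx hgy (by
        rintro w ⟨a, ha, b, hb, e1, e2⟩
        apply hsub
        exact ⟨(x, a), ha, (y, b), hb, rho_eq_mul h0.le ezx e1, rho_eq_mul h1.le ezy e2⟩)
    have step : t ^ (1/n) * S ≤ k z ^ (1/n) := by
      calc t ^ (1/n) * S = ENNReal.ofReal ((1 - lam) ^ (N/n)) * (t * F) ^ (1/n) +
            ENNReal.ofReal (lam ^ (N/n)) * (t * G) ^ (1/n) := by
              rw [ENNReal.mul_rpow_of_nonneg _ _ hinv.le, ENNReal.mul_rpow_of_nonneg _ _ hinv.le,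
                hS]
              ring
        _ ≤ ENNReal.ofReal ((1 - lam) ^ (N/n)) * (f x) ^ (1/n) +
            ENNReal.ofReal (lam ^ (N/n)) * (g y) ^ (1/n) := by gcongr
        _ ≤ (μY (Prod.mk z ⁻¹' C)) ^ (1/n) := hBM
        _ ≤ k z ^ (1/n) := ENNReal.rpow_le_rpow (hkle z) hinv.le
    have step2 := ENNReal.rpow_le_rpow step hn.le
    rw [ENNReal.mul_rpow_of_nonneg _ _ hn.le, ← ENNReal.rpow_mul, ← ENNReal.rpow_mul,
      one_div_mul_cancel hn.ne', ENNReal.rpow_one, ENNReal.rpow_one] at step2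
    exact (ENNReal.le_div_iff_mul_le (Or.inl hSn0) (Or.inl hSnt)).2 step2

/-- Theorem `t:BM_ProdMetSpa_gen`: if `X` satisfies `B̄M(1)` and `Y`
satisfies the weighted inequality `BM(1/n, N/n)`, then `X × Y` satisfies
`BM(1/(n+1), (N+1)/(n+1))`. -/
theorem statement4 {X Y : Type*} [MetricSpace X] [MetricSpace Y]
    [MeasurableSpace X] [OpensMeasurableSpace X] [MeasurableSpace Y] [OpensMeasurableSpace Y]
    (μX : Measure X) (μY : Measure Y) [SigmaFinite μX] [IsLocallyFiniteMeasure μY]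
    [IsLocallyFiniteMeasure (μX.prod μY)]
    (hdX : StrictlyIntrinsicDist (dist : X → X → ℝ))
    (hdY : StrictlyIntrinsicDist (dist : Y → Y → ℝ))
    (hRadon : (μX.prod μY).InnerRegular)
    (n N : ℝ) (hn : 0 < n) (hN : 0 < N)
    (hX : SatisfiesBMbarLinear (dist : X → X → ℝ) μX)
    (hY : SatisfiesBMW (dist : Y → Y → ℝ) μY (1/n) (N/n)) :
    SatisfiesBMW (rho : X × Y → X × Y → ℝ) (μX.prod μY) (1/(n+1)) ((N+1)/(n+1)) := by
  intro lam hlam A B C _ _ hA hB hC hA0 hB0 hsub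
  haveI := hRadon
  obtain ⟨u, -, hu, hut⟩ := exists_seq_strictMono_tendsto' (pos_iff_ne_zero.2 hA0)
  obtain ⟨v, -, hv, hvt⟩ := exists_seq_strictMono_tendsto' (pos_iff_ne_zero.2 hB0)
  have hlim : Tendsto (fun m => ENNReal.ofReal ((1 - lam) ^ ((N+1)/(n+1))) * u m ^ (1/(n+1)) +
      ENNReal.ofReal (lam ^ ((N+1)/(n+1))) * v m ^ (1/(n+1))) atTop
      (𝓝 (ENNReal.ofReal ((1 - lam) ^ ((N+1)/(n+1))) * (μX.prod μY A) ^ (1/(n+1)) +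
      ENNReal.ofReal (lam ^ ((N+1)/(n+1))) * (μX.prod μY B) ^ (1/(n+1)))) := by
    refine Tendsto.add ?_ ?_
    · exact ENNReal.Tendsto.const_mul ((ENNReal.continuous_rpow_const.tendsto _).comp hut)
        (Or.inr ENNReal.ofReal_ne_top)
    · exact ENNReal.Tendsto.const_mul ((ENNReal.continuous_rpow_const.tendsto _).comp hvt)
        (Or.inr ENNReal.ofReal_ne_top)
  refine le_of_tendsto' hlim fun m => ?_
  obtain ⟨K, hKA, hK, huK⟩ := hA.exists_lt_isCompact (hu m).2
  obtain ⟨L, hLB, hL, hvL⟩ := hB.exists_lt_isCompact (hv m).2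
  have hsub' : starComb (rho : X × Y → X × Y → ℝ) lam K L ⊆ C := by
    rintro z ⟨a, ha, b, hb, e⟩
    exact hsub ⟨a, hKA ha, b, hLB hb, e⟩
  have hq : 0 ≤ 1 / (n + 1) := by positivity
  refine le_trans ?_ (compact_case μX μY n N hn hX hY hlam hK hL hC
    (lt_of_le_of_lt bot_le huK).ne' (lt_of_le_of_lt bot_le hvL).ne' hsub')
  gcongr

end
end
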